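/- Let λ > −1/2 and let ρ : [1,∞) → ℝ be absolutely continuous (ρ(x) = ρ(1) + ∫_1^x ρ'(u) du) with derivative ρ' satisfying ∫_1^∞ ρ'(u)² du < ∞, and suppose u^{−(λ+1)} ρ(u) → 0 as u → ∞ and ∫_1^∞ u^{−(λ+2)} ρ(u) du = 0. Then (1 + 2λ) ρ(1)² ≤ ∫_1^∞ ρ'(u)² du. -/

import Mathlib

open MeasureTheory intervalIntegral Filter

/-!
Let `K s = ∫_s^∞ u^{-(λ+2)} du = s^{-(λ+1)} / (λ+1)`. Fubini on the triangle `a < s ≤ u` turns the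
orthogonality relation into `K a • ρ a = -∫_a^∞ K s • ρ' s ds`, and Cauchy–Schwarz finishes, since
`∫_a^∞ s^{-2(λ+1)} ds = a^{-(2λ+1)} / (2λ+1)`.

For a non-measurable `ρ'` the integral over `(a, u]` may be the junk value `0`. What survives is the
measurability of `‖ρ'‖ = √(‖ρ'‖²)` and the bound `‖∫_a^u ρ'‖ ≤ ∫_a^u ‖ρ'‖`, and these suffice once
the identity above is weakened to an inequality between norms.
-/

section Fubini

variable {α 𝕜 : Type*} [RCLike 𝕜] [TopologicalSpace α] [SecondCountableTopology α]
  [MeasurableSpace α] [OpensMeasurableSpace α] [PartialOrder α] [OrderClosedTopology α]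
  {μ ν : Measure α} [SFinite μ] [SFinite ν] {k h : α → 𝕜}

lemma integrable_indicator_le_mul (hk : Integrable k μ) (hh : AEStronglyMeasurable h ν)
    (hhk : Integrable (fun s ↦ ‖h s‖ * ∫ u in Set.Ici s, ‖k u‖ ∂μ) ν) :
    Integrable ({p : α × α | p.2 ≤ p.1}.indicator fun p ↦ k p.1 * h p.2) (μ.prod ν) := by
  have slice (s u : α) : {p : α × α | p.2 ≤ p.1}.indicator (fun p ↦ k p.1 * h p.2) (u, s) =
      (Set.Ici s).indicator k u * h s := by
    by_cases hsu : s ≤ u <;> simp [hsu]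
  have meas : AEStronglyMeasurable ({p : α × α | p.2 ≤ p.1}.indicator fun p ↦ k p.1 * h p.2)
      (μ.prod ν) :=
    (hk.1.comp_fst.mul hh.comp_snd).indicator (measurableSet_le measurable_snd measurable_fst)
  rw [integrable_prod_iff' meas]
  simp only [slice]
  refine ⟨ae_of_all _ fun s ↦ (hk.indicator measurableSet_Ici).mul_const _, ?_⟩
  simpa only [norm_mul, norm_indicator_eq_indicator_norm, mul_comm ‖h _‖,
    MeasureTheory.integral_mul_const, MeasureTheory.integral_indicator measurableSet_Ici] using hhk

lemma integrable_and_integral_mul_integral_Iic_eq (hk : Integrable k μ)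
    (hh : AEStronglyMeasurable h ν)
    (hhk : Integrable (fun s ↦ ‖h s‖ * ∫ u in Set.Ici s, ‖k u‖ ∂μ) ν) :
    Integrable (fun u ↦ k u * ∫ s in Set.Iic u, h s ∂ν) μ ∧
      ∫ u, k u * ∫ s in Set.Iic u, h s ∂ν ∂μ = ∫ s, h s * ∫ u in Set.Ici s, k u ∂μ ∂ν := by
  set F : α → α → 𝕜 := fun u s ↦ {p : α × α | p.2 ≤ p.1}.indicator (fun p ↦ k p.1 * h p.2) (u, s)
  have F_int : Integrable (Function.uncurry F) (μ.prod ν) := integrable_indicator_le_mul hk hh hhk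
  have integral_F_left (u : α) : ∫ s, F u s ∂ν = k u * ∫ s in Set.Iic u, h s ∂ν := by
    rw [← MeasureTheory.integral_const_mul, ← MeasureTheory.integral_indicator measurableSet_Iic]
    rfl
  have integral_F_right (s : α) : ∫ u, F u s ∂μ = h s * ∫ u in Set.Ici s, k u ∂μ := by
    rw [mul_comm, ← MeasureTheory.integral_mul_const,
      ← MeasureTheory.integral_indicator measurableSet_Ici]
    rfl
  simp only [← integral_F_left, ← integral_F_right]
  exact ⟨F_int.integral_prod_left, integral_integral_swap F_int⟩

end Fubini

lemma sq_integral_mul_le {α : Type*} [MeasurableSpace α] {μ : Measure α} {f g : α → ℝ}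
    (hf : MemLp f 2 μ) (hg : MemLp g 2 μ) :
    (∫ x, f x * g x ∂μ) ^ 2 ≤ (∫ x, f x ^ 2 ∂μ) * ∫ x, g x ^ 2 ∂μ := by
  have holder : |∫ x, f x * g x ∂μ| ≤ √(∫ x, f x ^ 2 ∂μ) * √(∫ x, g x ^ 2 ∂μ) := by
    calc |∫ x, f x * g x ∂μ| ≤ ∫ x, ‖f x‖ * ‖g x‖ ∂μ := by
          simpa only [norm_mul, Real.norm_eq_abs] using
            MeasureTheory.norm_integral_le_integral_norm fun x ↦ f x * g x
      _ ≤ _ := by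
          simpa [Real.sqrt_eq_rpow] using
            integral_mul_norm_le_Lp_mul_Lq .two_two (μ := μ) (f := f) (g := g)
              (by simpa using hf) (by simpa using hg)
  rw [← sq_abs, ← Real.sq_sqrt (integral_nonneg fun x ↦ sq_nonneg (f x)),
    ← Real.sq_sqrt (integral_nonneg fun x ↦ sq_nonneg (g x)), ← mul_pow]
  gcongr

lemma memLp_two_rpow_Ioi {a p : ℝ} (ha : 0 < a) (hp : p < -(1 / 2)) :
    MemLp (fun s : ℝ ↦ s ^ p) 2 (volume.restrict (Set.Ioi a)) := by
  refine (memLp_two_iff_integrable_sq (by fun_prop)).2 ?_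
  refine (integrableOn_Ioi_rpow_of_lt (a := p * 2) (by linarith) ha).congr_fun
    (fun s hs ↦ ?_) measurableSet_Ioi
  exact_mod_cast Real.rpow_mul_natCast (ha.trans hs).le p 2

lemma integral_Ioi_rpow_sq {a p : ℝ} (ha : 0 < a) (hp : p < -(1 / 2)) :
    ∫ s in Set.Ioi a, (s ^ p) ^ 2 = -(a * (a ^ p) ^ 2) / (2 * p + 1) := by
  have rpow_sq (s : ℝ) (hs : 0 < s) : (s ^ p) ^ 2 = s ^ (2 * p) := by
    rw [mul_comm]
    exact_mod_cast (Real.rpow_mul_natCast hs.le p 2).symm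
  rw [rpow_sq a ha, mul_comm a, ← Real.rpow_add_one ha.ne',
    ← integral_Ioi_rpow_of_lt (by linarith) ha]
  exact setIntegral_congr_fun measurableSet_Ioi fun s hs ↦ rpow_sq s (ha.trans hs)

section Primitive

variable {E : Type*} [NormedAddCommGroup E] [NormedSpace ℝ E]

lemma stronglyMeasurable_integral_Iic (μ : Measure ℝ) [NullSingletonClass μ] (f : ℝ → E) :
    StronglyMeasurable fun x ↦ ∫ s in Set.Iic x, f s ∂μ := by
  set F : ℝ → E := fun x ↦ ∫ s in Set.Iic x, f s ∂μ
  set S : Set ℝ := {x | IntegrableOn f (Set.Iic x) μ}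
  have S_meas : MeasurableSet S := Set.OrdConnected.measurableSet
    ⟨fun _ _ y hy z hz ↦ IntegrableOn.mono_set hy (Set.Iic_subset_Iic.2 hz.2)⟩
  have F_cont : ContinuousOn F S := by
    intro x hx
    obtain ⟨y, hy, hxy, hyS⟩ : ∃ y ∈ S, x ≤ y ∧ Set.Iic y ∈ nhdsWithin x S := by
      by_cases! hmax : ∃ y ∈ S, x < y
      · obtain ⟨y, hy, hxy⟩ := hmax
        exact ⟨y, hy, hxy.le, mem_nhdsWithin_of_mem_nhds (Iic_mem_nhds hxy)⟩
      · exact ⟨x, hx, le_rfl, mem_of_superset self_mem_nhdsWithin hmax⟩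
    exact (IntegrableOn.continuousOn_Iic_primitive_Iic hy x hxy).mono_of_mem_nhdsWithin hyS
  -- Off `S` the integral takes its junk value `0`.
  have F_zero : Sᶜ.domRestrict F = 0 := funext fun x ↦ integral_undef x.2
  exact stronglyMeasurable_of_restrict_of_restrict_compl S_meas
    (continuousOn_iff_continuous_domRestrict.1 F_cont).stronglyMeasurable
    (F_zero ▸ stronglyMeasurable_zero)

lemma integrable_and_norm_integral_smul_integral_Iic_le {μ ν : Measure ℝ} [SFinite μ] [SFinite ν]
    [NullSingletonClass ν] {k : ℝ → ℝ} {f : ℝ → E} (hk : Integrable k μ)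
    (hf : AEStronglyMeasurable (fun s ↦ ‖f s‖) ν)
    (hfk : Integrable (fun s ↦ ‖f s‖ * ∫ u in Set.Ici s, ‖k u‖ ∂μ) ν) :
    Integrable (fun u ↦ k u • ∫ s in Set.Iic u, f s ∂ν) μ ∧
      ‖∫ u, k u • ∫ s in Set.Iic u, f s ∂ν ∂μ‖ ≤
        ∫ s, ‖f s‖ * ∫ u in Set.Ici s, ‖k u‖ ∂μ ∂ν := by
  obtain ⟨majorant_int, majorant_eq⟩ :=
    integrable_and_integral_mul_integral_Iic_eq hk.norm hf (by simpa only [norm_norm] using hfk)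
  have norm_le (u : ℝ) :
      ‖k u • ∫ s in Set.Iic u, f s ∂ν‖ ≤ ‖k u‖ * ∫ s in Set.Iic u, ‖f s‖ ∂ν := by
    rw [norm_smul]
    gcongr
    exact MeasureTheory.norm_integral_le_integral_norm f
  have meas : AEStronglyMeasurable (fun u ↦ k u • ∫ s in Set.Iic u, f s ∂ν) μ :=
    hk.1.smul (stronglyMeasurable_integral_Iic ν f).aestronglyMeasurable
  rw [← majorant_eq]
  exact ⟨majorant_int.mono' meas (ae_of_all _ norm_le),
    norm_integral_le_of_norm_le majorant_int (ae_of_all _ norm_le)⟩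

variable [CompleteSpace E]

lemma abs_integral_mul_norm_le_of_integral_smul_eq_zero {a : ℝ} {k : ℝ → ℝ}
    {ρ ρ' : ℝ → E} (hρ : ∀ x, a ≤ x → ρ x = ρ a + ∫ u in a..x, ρ' u)
    (hk : IntegrableOn k (Set.Ioi a))
    (hρ' : AEStronglyMeasurable (fun s ↦ ‖ρ' s‖) (volume.restrict (Set.Ioi a)))
    (hρk : IntegrableOn (fun s ↦ ‖ρ' s‖ * ∫ u in Set.Ioi s, ‖k u‖) (Set.Ioi a))
    (horth : ∫ u in Set.Ioi a, k u • ρ u = 0) :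
    |∫ u in Set.Ioi a, k u| * ‖ρ a‖ ≤ ∫ s in Set.Ioi a, ‖ρ' s‖ * ∫ u in Set.Ioi s, ‖k u‖ := by
  set μ : Measure ℝ := volume.restrict (Set.Ioi a)
  have tail_eq (s : ℝ) (hs : s ∈ Set.Ioi a) :
      ‖ρ' s‖ * ∫ u in Set.Ioi s, ‖k u‖ = ‖ρ' s‖ * ∫ u in Set.Ici s, ‖k u‖ ∂μ := by
    rw [Measure.restrict_restrict measurableSet_Ici,
      Set.inter_eq_left.2 (Set.Ici_subset_Ioi.2 hs), integral_Ici_eq_integral_Ioi]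
  have kρ_eq (u : ℝ) (hu : u ∈ Set.Ioi a) :
      k u • ρ u = k u • ρ a + k u • ∫ s in Set.Iic u, ρ' s ∂μ := by
    rw [Measure.restrict_restrict measurableSet_Iic, Set.inter_comm, Set.Ioi_inter_Iic,
      ← integral_of_le (le_of_lt hu), hρ u (le_of_lt hu), smul_add]
  obtain ⟨remainder_int, remainder_le⟩ :=
    integrable_and_norm_integral_smul_integral_Iic_le hk hρ'
      (hρk.congr_fun tail_eq measurableSet_Ioi)
  have remainder_eq : (∫ u, k u ∂μ) • ρ a + ∫ u, k u • ∫ s in Set.Iic u, ρ' s ∂μ ∂μ = 0 := by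
    rw [← horth, setIntegral_congr_fun measurableSet_Ioi kρ_eq,
      integral_add (hk.smul_const _) remainder_int, _root_.integral_smul_const]
  rwa [← Real.norm_eq_abs, ← norm_smul, eq_neg_of_add_eq_zero_left remainder_eq, norm_neg,
    setIntegral_congr_fun measurableSet_Ioi tail_eq]

lemma rpow_mul_norm_le_integral_norm_mul_rpow {a lam : ℝ} (ha : 0 < a) (hlam : -1 < lam)
    {ρ ρ' : ℝ → E} (hρ : ∀ x, a ≤ x → ρ x = ρ a + ∫ u in a..x, ρ' u)
    (hρ' : AEStronglyMeasurable (fun s ↦ ‖ρ' s‖) (volume.restrict (Set.Ioi a)))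
    (hint : IntegrableOn (fun s ↦ ‖ρ' s‖ * s ^ (-(lam + 1))) (Set.Ioi a))
    (horth : ∫ u in Set.Ioi a, u ^ (-(lam + 2)) • ρ u = 0) :
    a ^ (-(lam + 1)) * ‖ρ a‖ ≤ ∫ s in Set.Ioi a, ‖ρ' s‖ * s ^ (-(lam + 1)) := by
  have hlam_pos : 0 < lam + 1 := by linarith
  have tail (s : ℝ) (hs : 0 < s) :
      ∫ u in Set.Ioi s, u ^ (-(lam + 2)) = s ^ (-(lam + 1)) / (lam + 1) := by
    rw [integral_Ioi_rpow_of_lt (by linarith) hs, show -(lam + 2) + 1 = -(lam + 1) by ring,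
      neg_div_neg_eq]
  have tail_norm (s : ℝ) (hs : s ∈ Set.Ioi a) : ‖ρ' s‖ * ∫ u in Set.Ioi s, ‖u ^ (-(lam + 2))‖ =
      ‖ρ' s‖ * s ^ (-(lam + 1)) / (lam + 1) := by
    have hs0 : 0 < s := ha.trans hs
    rw [mul_div_assoc, ← tail s hs0, setIntegral_congr_fun measurableSet_Ioi fun u hu ↦
      Real.norm_of_nonneg (Real.rpow_nonneg (hs0.trans hu).le _)]
  have bound := abs_integral_mul_norm_le_of_integral_smul_eq_zero hρ
    (integrableOn_Ioi_rpow_of_lt (by linarith) ha) hρ'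
    ((integrableOn_congr_fun tail_norm measurableSet_Ioi).2 (hint.div_const _)) horth
  rwa [tail a ha, setIntegral_congr_fun measurableSet_Ioi tail_norm, MeasureTheory.integral_div,
    abs_of_nonneg (by positivity), div_mul_eq_mul_div, div_le_div_iff_of_pos_right hlam_pos]
    at bound

theorem muntz_cauchy_schwarz_step_general {a lam : ℝ} (ha : 0 < a) (hlam : -(1 / 2) < lam)
    {ρ ρ' : ℝ → E} (hρ : ∀ x, a ≤ x → ρ x = ρ a + ∫ u in a..x, ρ' u)
    (hL2 : IntegrableOn (fun u ↦ ‖ρ' u‖ ^ 2) (Set.Ioi a))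
    (horth : ∫ u in Set.Ioi a, u ^ (-(lam + 2)) • ρ u = 0) :
    (1 + 2 * lam) * ‖ρ a‖ ^ 2 ≤ a * ∫ u in Set.Ioi a, ‖ρ' u‖ ^ 2 := by
  have hc : 0 < 1 + 2 * lam := by linarith
  have ρ'_meas : AEStronglyMeasurable (fun u ↦ ‖ρ' u‖) (volume.restrict (Set.Ioi a)) := by
    simpa using hL2.1.aemeasurable.sqrt.aestronglyMeasurable
  have ρ'_memLp : MemLp (fun u ↦ ‖ρ' u‖) 2 (volume.restrict (Set.Ioi a)) :=
    (memLp_two_iff_integrable_sq ρ'_meas).2 hL2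
  have w_memLp := memLp_two_rpow_Ioi (p := -(lam + 1)) ha (by linarith)
  have bound : a ^ (-(lam + 1)) * ‖ρ a‖ ≤ ∫ s in Set.Ioi a, ‖ρ' s‖ * s ^ (-(lam + 1)) :=
    rpow_mul_norm_le_integral_norm_mul_rpow ha (by linarith) hρ ρ'_meas
      (ρ'_memLp.integrable_mul w_memLp) horth
  have w_sq : ∫ s in Set.Ioi a, (s ^ (-(lam + 1))) ^ 2 =
      a * (a ^ (-(lam + 1))) ^ 2 / (1 + 2 * lam) := by
    rw [integral_Ioi_rpow_sq ha (by linarith), ← neg_div_neg_eq, neg_neg]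
    ring_nf
  have sq_bound : (a ^ (-(lam + 1)) * ‖ρ a‖) ^ 2 ≤
      (∫ u in Set.Ioi a, ‖ρ' u‖ ^ 2) * (a * (a ^ (-(lam + 1))) ^ 2 / (1 + 2 * lam)) :=
    calc (a ^ (-(lam + 1)) * ‖ρ a‖) ^ 2
        ≤ (∫ s in Set.Ioi a, ‖ρ' s‖ * s ^ (-(lam + 1))) ^ 2 := by gcongr
      _ ≤ _ := w_sq ▸ sq_integral_mul_le ρ'_memLp w_memLp
  calc (1 + 2 * lam) * ‖ρ a‖ ^ 2
      = (1 + 2 * lam) / (a ^ (-(lam + 1))) ^ 2 * (a ^ (-(lam + 1)) * ‖ρ a‖) ^ 2 := by field_simp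
    _ ≤ (1 + 2 * lam) / (a ^ (-(lam + 1))) ^ 2 * ((∫ u in Set.Ioi a, ‖ρ' u‖ ^ 2) *
          (a * (a ^ (-(lam + 1))) ^ 2 / (1 + 2 * lam))) := by gcongr
    _ = a * ∫ u in Set.Ioi a, ‖ρ' u‖ ^ 2 := by field_simp

end Primitive

theorem muntz_cauchy_schwarz_step (lam : ℝ) (hlam : lam > -(1/2 : ℝ))
    (rho rho' : ℝ → ℝ)
    (habs : ∀ x : ℝ, 1 ≤ x → rho x = rho 1 + ∫ u in (1:ℝ)..x, rho' u)
    (hL2 : IntegrableOn (fun u : ℝ => (rho' u) ^ 2) (Set.Ioi 1))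
    (hdecay : Tendsto (fun u : ℝ => u ^ (-(lam + 1)) * rho u) atTop (nhds 0))
    (horth : (∫ u in Set.Ioi (1:ℝ), u ^ (-(lam + 2)) * rho u) = 0) :
    (1 + 2 * lam) * (rho 1) ^ 2 ≤ ∫ u in Set.Ioi (1:ℝ), (rho' u) ^ 2 := by
  simpa using muntz_cauchy_schwarz_step_general one_pos hlam habs (by simpa using hL2) horth
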